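/- Let η > 0, let N ≥ 1, let w = (w_1,…,w_N) be a probability vector with w_i > 0 for all i, and let l = (l_1,…,l_N) ∈ ℝ^N be a vector of losses. Define the exponentially updated weights w^μ_i = w_i e^{-η l_i} / (Σ_{j=1}^N w_j e^{-η l_j}) and the mix loss m = -(1/η) ln Σ_{i=1}^N w_i e^{-η l_i}. Then for every probability vector q = (q_1,…,q_N): m = Σ_{i=1}^N q_i l_i + (1/η)(D(q‖w) - D(q‖w^μ)). -/

import Mathlib

/-!
The log-density of the updated weights is `log (wμ i / w i) = -η * l i + η * m`: the normalising
constant is `exp (-η * m)`. Averaging against `q`, the left side becomes `D(q‖w) - D(q‖wμ)`, since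
the entropy of `q` cancels, and the identity is solved for `m`.
-/

section GibbsTilt

variable {ι : Type*} [Fintype ι]

/-- The relative entropy (Kullback–Leibler divergence) `D(q‖p)` of finite weight vectors. It is
real-valued, so it is meaningful only for nonnegative vectors with `q` vanishing wherever `p`
does; a term with `q i = 0` is `0`. -/
noncomputable def relEntropy (q p : ι → ℝ) : ℝ :=
  ∑ i, q i * Real.log (q i / p i)

/-- The normalising constant of the weights `w` reweighted by `exp f`. -/
noncomputable def partitionSum (w f : ι → ℝ) : ℝ :=
  ∑ i, w i * Real.exp (f i)

/-- The exponential (Gibbs) tilt of `w` by `f`, normalised to total mass one. The exponentially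
updated weights for losses `l` at learning rate `η` are the case `f = -η * l`. -/
noncomputable def gibbsTilt (w f : ι → ℝ) (i : ι) : ℝ :=
  w i * Real.exp (f i) / partitionSum w f

/-- The mix loss of the weights `w` on the losses `l` at learning rate `η`. -/
noncomputable def mixLoss (η : ℝ) (w l : ι → ℝ) : ℝ :=
  -(1 / η) * Real.log (partitionSum w fun i => -η * l i)

theorem relEntropy_sub_relEntropy {q p r : ι → ℝ} (hp : ∀ i, q i ≠ 0 → p i ≠ 0)
    (hr : ∀ i, q i ≠ 0 → r i ≠ 0) :
    relEntropy q p - relEntropy q r = ∑ i, q i * Real.log (r i / p i) := by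
  rw [relEntropy, relEntropy, ← Finset.sum_sub_distrib]
  refine Finset.sum_congr rfl fun i _ => ?_
  by_cases hq : q i = 0
  · simp [hq]
  · rw [Real.log_div hq (hp i hq), Real.log_div hq (hr i hq), Real.log_div (hr i hq) (hp i hq)]
    ring

theorem partitionSum_pos {w : ι → ℝ} (hw : 0 < w) (f : ι → ℝ) : 0 < partitionSum w f := by
  obtain ⟨hw_nonneg, i, hi⟩ := Pi.lt_def.mp hw
  exact Finset.sum_pos' (fun j _ => mul_nonneg (hw_nonneg j) (Real.exp_pos _).le)
    ⟨i, Finset.mem_univ i, mul_pos hi (Real.exp_pos _)⟩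

theorem gibbsTilt_ne_zero {w f : ι → ℝ} {i : ι} (hw : w i ≠ 0) (hZ : partitionSum w f ≠ 0) :
    gibbsTilt w f i ≠ 0 :=
  div_ne_zero (mul_ne_zero hw (Real.exp_ne_zero _)) hZ

theorem log_gibbsTilt_div {w f : ι → ℝ} {i : ι} (hw : w i ≠ 0) (hZ : partitionSum w f ≠ 0) :
    Real.log (gibbsTilt w f i / w i) = f i - Real.log (partitionSum w f) := by
  have h_density : gibbsTilt w f i / w i = Real.exp (f i) / partitionSum w f := by
    rw [gibbsTilt, div_right_comm, mul_div_cancel_left₀ _ hw]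
  rw [h_density, Real.log_div (Real.exp_ne_zero _) hZ, Real.log_exp]

theorem relEntropy_sub_relEntropy_gibbsTilt {q w f : ι → ℝ} (hqw : ∀ i, q i ≠ 0 → w i ≠ 0)
    (hZ : partitionSum w f ≠ 0) :
    relEntropy q w - relEntropy q (gibbsTilt w f) =
      ∑ i, q i * f i - (∑ i, q i) * Real.log (partitionSum w f) := by
  rw [relEntropy_sub_relEntropy hqw fun i hq => gibbsTilt_ne_zero (hqw i hq) hZ,
    Finset.sum_mul, ← Finset.sum_sub_distrib]
  refine Finset.sum_congr rfl fun i _ => ?_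
  by_cases hq : q i = 0
  · simp [hq]
  · rw [log_gibbsTilt_div (hqw i hq) hZ, mul_sub]

theorem statement_0_general {η : ℝ} (hη : η ≠ 0) {w q : ι → ℝ} (l : ι → ℝ) (hw : 0 ≤ w)
    (hq : q ∈ stdSimplex ℝ ι) (hqw : ∀ i, q i ≠ 0 → w i ≠ 0) :
    mixLoss η w l = ∑ i, q i * l i +
      (1 / η) * (relEntropy q w - relEntropy q (gibbsTilt w fun i => -η * l i)) := by
  have hw_pos : 0 < w := by
    obtain ⟨i, -, hi⟩ := Finset.exists_ne_zero_of_sum_ne_zero (hq.2.trans_ne one_ne_zero)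
    exact Pi.lt_def.mpr ⟨hw, i, (hw i).lt_of_ne' (hqw i hi)⟩
  have h_mean : ∑ i, q i * (-η * l i) = -η * ∑ i, q i * l i := by
    simp only [Finset.mul_sum, mul_left_comm]
  rw [relEntropy_sub_relEntropy_gibbsTilt hqw (partitionSum_pos hw_pos _).ne', hq.2, h_mean,
    mixLoss]
  field_simp
  ring

end GibbsTilt

/-- Mix loss identity (Lemma 1 / Bousquet–Warmuth style).
For a probability vector `w` with positive entries, losses `l`, exponentially
updated weights `wμ` and mix loss `m`, one has for every probability vector `q`:
`m = ∑ q i * l i + (1/η) (D(q‖w) - D(q‖wμ))`, where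
`D(q‖p) = ∑ q i * log (q i / p i)` (with the convention `0 log 0 = 0`). -/
theorem statement_0
    (η : ℝ) (hη : 0 < η) (N : ℕ) (hN : 1 ≤ N)
    (w l q : Fin N → ℝ)
    (hwpos : ∀ i, 0 < w i) (hwsum : ∑ i, w i = 1)
    (hqnonneg : ∀ i, 0 ≤ q i) (hqsum : ∑ i, q i = 1)
    (wμ : Fin N → ℝ)
    (hwμ : ∀ i, wμ i =
      w i * Real.exp (-η * l i) / ∑ j, w j * Real.exp (-η * l j))
    (m : ℝ)
    (hm : m = -(1 / η) * Real.log (∑ i, w i * Real.exp (-η * l i))) :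
    m = (∑ i, q i * l i) +
      (1 / η) * ((∑ i, q i * Real.log (q i / w i)) -
        (∑ i, q i * Real.log (q i / wμ i))) := by
  obtain rfl : wμ = gibbsTilt w fun i => -η * l i := funext hwμ
  exact hm.trans <|
    statement_0_general hη.ne' l (fun i => (hwpos i).le) ⟨hqnonneg, hqsum⟩ fun i _ => (hwpos i).ne'
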